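/- arXiv:2404.04859 — 2 statements merged into one kernel-verified Lean document; each statement's English description precedes it below -/
import Mathlib

section
/- Let (z₁, z₂) be a centered bivariate Gaussian with unit variances and correlation ρ. Then lim_{ε → ∞} E[ σ(ε a z₁) σ(ε b z₂) / ε² ] = ab · E[ z₁ z₂ (α 1_{z₁<0} + β 1_{z₁>0})(α 1_{z₂<0} + β 1_{z₂>0}) ], where σ is differentiable with σ(0)=0, |σ'| ≤ C, σ'(z) → α as z → −∞ and σ'(z) → β as z → +∞, and a, b > 0. -/
open MeasureTheory ProbabilityTheory Filter

/-- The centered bivariate Gaussian on `ℝ × ℝ` with unit variances and correlation `ρ`,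
realized as the law of `(u, ρ u + √(1-ρ²) v)` for independent standard Gaussians `u, v`. -/
noncomputable def biGaussian (ρ : ℝ) : Measure (ℝ × ℝ) :=
  Measure.map (fun p : ℝ × ℝ => (p.1, ρ * p.1 + Real.sqrt (1 - ρ ^ 2) * p.2))
    ((gaussianReal 0 1).prod (gaussianReal 0 1))

lemma slope_top (g : ℝ → ℝ) (β : ℝ) (hd : Differentiable ℝ g)
    (hβ : Tendsto (deriv g) atTop (nhds β)) :
    Tendsto (fun s => g s / s) atTop (nhds β) := by
  rw [Metric.tendsto_atTop]
  intro e he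
  obtain ⟨M, hM⟩ := (Metric.tendsto_atTop.1 hβ) (e / 2) (by positivity)
  set K := max M 1 with hK
  have hb : ∀ s ≥ K, |(g s - β * s) - (g K - β * K)| ≤ e / 2 * |s - K| := by
    intro s hs
    have hder : ∀ x, HasDerivAt (fun x => g x - β * x) (deriv g x - β) x := by
      intro x
      have h := (hd x).hasDerivAt.sub ((hasDerivAt_id x).const_mul β)
      rw [mul_one] at h
      exact h
    have := Convex.norm_image_sub_le_of_norm_hasDerivWithin_le (s := Set.Ici K)
      (f := fun x => g x - β * x) (f' := fun x => deriv g x - β) (C := e / 2)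
      (fun x _ => (hder x).hasDerivWithinAt)
      (fun x hx => by
        have h := hM x (le_trans (le_max_left _ _) hx)
        rw [Real.dist_eq] at h
        exact h.le)
      (convex_Ici K) (Set.mem_Ici.2 le_rfl) (Set.mem_Ici.2 hs)
    simpa [Real.norm_eq_abs] using this
  set D := |g K - β * K| with hD
  refine ⟨max K (2 * D / e + 1), fun s hs => ?_⟩
  have h1 : K ≤ s := le_trans (le_max_left _ _) hs
  have h2 : 2 * D / e + 1 ≤ s := le_trans (le_max_right _ _) hs
  have hK1 : 1 ≤ K := le_max_right _ _
  have hs0 : 0 < s := by linarith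
  have h3 := hb s h1
  rw [abs_of_nonneg (by linarith : 0 ≤ s - K)] at h3
  have h4 : 2 * D < e * s := by
    have : 2 * D / e < s := by linarith
    rw [div_lt_iff₀ he] at this
    linarith
  have h5 : |g s - β * s| ≤ e / 2 * (s - K) + D := by
    have := abs_add_le ((g s - β * s) - (g K - β * K)) (g K - β * K)
    rw [sub_add_cancel] at this
    linarith
  rw [Real.dist_eq, show g s / s - β = (g s - β * s) / s by field_simp, abs_div,
    abs_of_pos hs0, div_lt_iff₀ hs0]
  nlinarith

lemma slope_pt (σ : ℝ → ℝ) (α β : ℝ) (h0 : σ 0 = 0) (hdiff : Differentiable ℝ σ)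
    (hα : Tendsto (deriv σ) atBot (nhds α)) (hβ : Tendsto (deriv σ) atTop (nhds β))
    (a : ℝ) (ha : 0 < a) (x : ℝ) :
    Tendsto (fun ε : ℝ => σ (ε * a * x) / ε) atTop
      (nhds (a * x * ((if x < 0 then α else 0) + (if 0 < x then β else 0)))) := by
  rcases lt_trichotomy x 0 with hx | hx | hx
  · have hd : Differentiable ℝ (fun y => σ (-y)) := hdiff.comp differentiable_neg
    have hl : Tendsto (deriv (fun y => σ (-y))) atTop (nhds (-α)) := by
      have : deriv (fun y => σ (-y)) = fun y => - deriv σ (-y) := by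
        funext y
        exact deriv_comp_neg σ y
      rw [this]
      exact (hα.comp tendsto_neg_atTop_atBot).neg
    have hpos : 0 < a * (-x) := by nlinarith
    have ht : Tendsto (fun ε : ℝ => ε * (a * (-x))) atTop atTop :=
      tendsto_id.atTop_mul_const hpos
    have := ((slope_top _ _ hd hl).comp ht).mul_const (a * (-x))
    simp only [hx, if_true, not_lt.2 hx.le, if_false, add_zero]
    have e1 : a * x * α = -α * (a * -x) := by ring
    rw [e1]
    refine this.congr' ?_
    filter_upwards [eventually_gt_atTop 0] with ε hε
    have e2 : -(ε * (a * -x)) = ε * a * x := by ring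
    simp only [Function.comp, e2]
    rw [div_mul_eq_mul_div, mul_div_mul_right _ _ hpos.ne']
  · subst hx
    simp [h0]
  · have hpos : 0 < a * x := by positivity
    have ht : Tendsto (fun ε : ℝ => ε * (a * x)) atTop atTop :=
      tendsto_id.atTop_mul_const hpos
    have := ((slope_top _ _ hdiff hβ).comp ht).mul_const (a * x)
    simp only [hx, if_true, not_lt.2 hx.le, if_false, zero_add]
    rw [mul_comm (a * x) β]
    refine this.congr' ?_
    filter_upwards [eventually_gt_atTop 0] with ε hε
    simp only [Function.comp, ← mul_assoc ε a x]
    rw [mul_assoc ε a x, div_mul_eq_mul_div, mul_div_mul_right _ _ hpos.ne']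

lemma integrable_prod_biGaussian (ρ : ℝ) :
    Integrable (fun p : ℝ × ℝ => p.1 * p.2) (biGaussian ρ) := by
  unfold biGaussian
  rw [integrable_map_measure (by fun_prop) (by fun_prop)]
  have hid : MemLp (id : ℝ → ℝ) 2 (gaussianReal 0 1) := memLp_id_gaussianReal 2
  have h1 : Integrable (fun x : ℝ => x) (gaussianReal 0 1) := hid.integrable (by norm_num)
  have h2 : Integrable (fun x : ℝ => x ^ 2) (gaussianReal 0 1) := hid.integrable_sq
  have h3 : Integrable (fun p : ℝ × ℝ => p.1 ^ 2)
    ((gaussianReal 0 1).prod (gaussianReal 0 1)) := h2.comp_fst _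
  have h4 : Integrable (fun p : ℝ × ℝ => p.1 * p.2)
    ((gaussianReal 0 1).prod (gaussianReal 0 1)) := h1.mul_prod h1
  refine ((h3.const_mul ρ).add (h4.const_mul (Real.sqrt (1 - ρ ^ 2)))).congr ?_
  refine Eventually.of_forall fun p => ?_
  simp only [Pi.add_apply, Function.comp]
  ring

/-- For a centered bivariate Gaussian with unit variances and correlation `ρ`, and `σ`
differentiable with `σ(0) = 0`, `|σ'| ≤ C`, `σ'(z) → α` at `-∞`, `σ'(z) → β` at `+∞`,
and `a, b > 0`:
`lim_{ε → ∞} E[σ(εaz₁)σ(εbz₂)/ε²]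
  = a b · E[z₁ z₂ (α 1_{z₁<0} + β 1_{z₁>0})(α 1_{z₂<0} + β 1_{z₂>0})]`. -/
theorem biGaussian_sigma_limit (σ : ℝ → ℝ) (C α β a b ρ : ℝ)
    (h0 : σ 0 = 0) (hdiff : Differentiable ℝ σ) (hC : ∀ z, |deriv σ z| ≤ C)
    (hα : Tendsto (deriv σ) atBot (nhds α)) (hβ : Tendsto (deriv σ) atTop (nhds β))
    (ha : 0 < a) (hb : 0 < b) (hρ : ρ ∈ Set.Icc (-1 : ℝ) 1) :
    Tendsto (fun ε : ℝ => ∫ p, σ (ε * a * p.1) * σ (ε * b * p.2) / ε ^ 2 ∂(biGaussian ρ))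
      atTop
      (nhds (a * b * ∫ p, p.1 * p.2 *
        ((if p.1 < 0 then α else 0) + (if 0 < p.1 then β else 0)) *
        ((if p.2 < 0 then α else 0) + (if 0 < p.2 then β else 0)) ∂(biGaussian ρ))) := by
  have hlip : ∀ x, |σ x| ≤ C * |x| := by
    intro x
    have := Convex.norm_image_sub_le_of_norm_deriv_le (s := Set.univ) (f := σ) (C := C)
      (fun x _ => hdiff x) (fun x _ => hC x) convex_univ (Set.mem_univ 0) (Set.mem_univ x)
    simpa [h0] using this
  have hC0 : 0 ≤ C := (abs_nonneg _).trans (hC 0)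
  have hc := hdiff.continuous
  rw [← integral_const_mul]
  refine tendsto_integral_filter_of_dominated_convergence
    (fun p => (C * a) * (C * b) * |p.1 * p.2|) ?_ ?_ ?_ ?_
  · refine Eventually.of_forall fun ε => Continuous.aestronglyMeasurable ?_
    fun_prop
  · filter_upwards [eventually_gt_atTop 0] with ε hε
    refine Eventually.of_forall fun p => ?_
    have k1 := hlip (ε * a * p.1)
    have k2 := hlip (ε * b * p.2)
    rw [abs_mul, abs_of_pos (mul_pos hε ha)] at k1
    rw [abs_mul, abs_of_pos (mul_pos hε hb)] at k2
    rw [Real.norm_eq_abs, abs_div, abs_mul, abs_of_pos (pow_pos hε 2),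
      div_le_iff₀ (pow_pos hε 2), abs_mul]
    calc _ ≤ (C * (ε * a * |p.1|)) * (C * (ε * b * |p.2|)) :=
          mul_le_mul k1 k2 (abs_nonneg _) (by positivity)
      _ = _ := by ring
  · exact (integrable_prod_biGaussian ρ).abs.const_mul _
  · refine Eventually.of_forall fun p => ?_
    have k := (slope_pt σ α β h0 hdiff hα hβ a ha p.1).mul
      (slope_pt σ α β h0 hdiff hα hβ b hb p.2)
    convert k using 1
    · funext ε
      rw [div_mul_div_comm, pow_two]
    · congr 1
      ring
end

section
/- With the choice α = 0, β = √2 for the asymptotic slopes, the limiting kernel G_∞(z_i, z_j) := lim_{ε→∞} E_{w ~ N(0, I_d)} [σ(ε w·z_i) σ(ε w·z_j) / ε²] on unit vectors z_i, z_j ∈ ℝ^d equals (1/π)(⟨z_i, z_j⟩ (π − arccos⟨z_i, z_j⟩) + √(1 − ⟨z_i, z_j⟩²)). -/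
open MeasureTheory ProbabilityTheory Filter

lemma charInt1 (t : ℝ) :
    ∫ x, Complex.exp (((t * x : ℝ) : ℂ) * Complex.I) ∂(gaussianReal 0 1)
      = Complex.exp (((-t ^ 2 / 2 : ℝ)) : ℂ) := by
  have h := charFun_gaussianReal (μ := 0) (v := 1) t
  rw [charFun_apply_real] at h
  push_cast
  rw [h]
  congr 1
  push_cast
  ring

lemma charIntPi {d : ℕ} (a : Fin d → ℝ) :
    ∫ w, Complex.exp (((∑ k, w k * a k : ℝ) : ℂ) * Complex.I)
      ∂(Measure.pi fun _ : Fin d => gaussianReal 0 1)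
      = Complex.exp (((-(∑ k, a k ^ 2) / 2 : ℝ)) : ℂ) := by
  have h := integral_fintype_prod_eq_prod (𝕜 := ℂ) (ι := Fin d) (E := fun _ => ℝ)
    (fun k x => Complex.exp (((a k * x : ℝ) : ℂ) * Complex.I))
    (μ := fun _ => gaussianReal 0 1)
  simp only [charInt1, ← Complex.exp_sum] at h
  convert h using 2
  · rfl
  · ext w
    congr 1
    push_cast
    rw [Finset.sum_mul]
    exact Finset.sum_congr rfl fun k _ => by ring
  · push_cast
    rw [← Finset.sum_neg_distrib, Finset.sum_div]

lemma charIntProd (a b : ℝ) :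
    ∫ p : ℝ × ℝ, Complex.exp (((a * p.1 + b * p.2 : ℝ) : ℂ) * Complex.I)
      ∂((gaussianReal 0 1).prod (gaussianReal 0 1))
      = Complex.exp (((-(a ^ 2 + b ^ 2) / 2 : ℝ)) : ℂ) := by
  have h := integral_prod_mul (L := ℂ) (μ := gaussianReal 0 1) (ν := gaussianReal 0 1)
    (fun x => Complex.exp (((a * x : ℝ) : ℂ) * Complex.I))
    (fun x => Complex.exp (((b * x : ℝ) : ℂ) * Complex.I))
  simp only [charInt1, ← Complex.exp_add] at h
  convert h using 2
  · rfl
  · ext w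
    congr 1
    push_cast
    ring
  · push_cast
    ring

lemma law_eq {d : ℕ} (zi zj : Fin d → ℝ) (hzi : ∑ k, zi k ^ 2 = 1) (hzj : ∑ k, zj k ^ 2 = 1)
    (c s : ℝ) (hcs : c ^ 2 + s ^ 2 = 1) (hc : ∑ k, zi k * zj k = c) :
    (Measure.pi fun _ : Fin d => gaussianReal 0 1).map
      (fun w => ((∑ k, w k * zi k, ∑ k, w k * zj k) : ℝ × ℝ))
    = ((gaussianReal 0 1).prod (gaussianReal 0 1)).map
      (fun p : ℝ × ℝ => ((p.1, c * p.1 + s * p.2) : ℝ × ℝ)) := by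
  have m1 : Measurable (fun w : Fin d → ℝ => ((∑ k, w k * zi k, ∑ k, w k * zj k) : ℝ × ℝ)) := by
    fun_prop
  have m2 : Measurable (fun p : ℝ × ℝ => ((p.1, c * p.1 + s * p.2) : ℝ × ℝ)) := by
    fun_prop
  have := Measure.isProbabilityMeasure_map (μ := Measure.pi fun _ : Fin d => gaussianReal 0 1)
    m1.aemeasurable
  have := Measure.isProbabilityMeasure_map (μ := (gaussianReal 0 1).prod (gaussianReal 0 1))
    m2.aemeasurable
  apply Measure.ext_of_charFunDual
  ext L
  obtain ⟨p, q, hL⟩ : ∃ p q : ℝ, ∀ x y : ℝ, L (x, y) = x * p + y * q := by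
    refine ⟨L (1, 0), L (0, 1), fun x y => ?_⟩
    have : ((x, y) : ℝ × ℝ) = x • (1, 0) + y • (0, 1) := by simp
    rw [this, map_add, map_smul, map_smul]
    simp
  rw [charFunDual_apply, charFunDual_apply, integral_map m1.aemeasurable (by fun_prop),
    integral_map m2.aemeasurable (by fun_prop)]
  simp only [hL]
  have e1 := charIntPi (fun k => p * zi k + q * zj k)
  have e2 := charIntProd (p + c * q) (s * q)
  have k1 : ∑ k, (p * zi k + q * zj k) ^ 2 = p ^ 2 + 2 * p * q * c + q ^ 2 := by
    have : ∀ k, (p * zi k + q * zj k) ^ 2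
      = p ^ 2 * zi k ^ 2 + 2 * p * q * (zi k * zj k) + q ^ 2 * zj k ^ 2 := fun k => by ring
    simp only [this, Finset.sum_add_distrib, ← Finset.mul_sum, hzi, hzj, hc]
    ring
  have k2 : (p + c * q) ^ 2 + (s * q) ^ 2 = p ^ 2 + 2 * p * q * c + q ^ 2 := by
    linear_combination q ^ 2 * hcs
  rw [k1] at e1
  rw [k2, ← e1] at e2
  convert e2.symm using 2
  · ext w
    congr 3
    rw [Finset.sum_mul, Finset.sum_mul, ← Finset.sum_add_distrib]
    exact Finset.sum_congr rfl fun k _ => by ring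
  · ext w
    congr 3
    ring

lemma angular (θ : ℝ) (h0 : 0 ≤ θ) (h1 : θ ≤ Real.pi) :
    ∫ φ in Set.Ioo (-Real.pi) Real.pi, max (Real.cos φ) 0 * max (Real.cos (φ - θ)) 0
      = ((Real.pi - θ) * Real.cos θ + Real.sin θ) / 2 := by
  have hpi := Real.pi_pos
  have e : ∫ φ in Set.Ioo (-Real.pi) Real.pi, max (Real.cos φ) 0 * max (Real.cos (φ - θ)) 0
      = ∫ φ in Set.Ioo (-Real.pi) Real.pi, (Set.Ioc (θ - Real.pi / 2) (Real.pi / 2)).indicator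
        (fun φ => Real.cos φ * Real.cos (φ - θ)) φ := by
    refine setIntegral_congr_fun measurableSet_Ioo fun φ hφ => ?_
    obtain ⟨ha, hb⟩ := hφ
    by_cases hm : φ ∈ Set.Ioc (θ - Real.pi / 2) (Real.pi / 2)
    · rw [Set.indicator_of_mem hm]
      obtain ⟨hc, hd⟩ := hm
      rw [max_eq_left (Real.cos_nonneg_of_neg_pi_div_two_le_of_le (by linarith) hd),
        max_eq_left (Real.cos_nonneg_of_neg_pi_div_two_le_of_le (by linarith) (by linarith))]
    · rw [Set.indicator_of_notMem hm]
      rcases le_or_gt (Real.pi / 2) φ with h | h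
      · rw [max_eq_right (Real.cos_nonpos_of_pi_div_two_le_of_le h (by linarith)), zero_mul]
      rcases le_or_gt φ (-(Real.pi / 2)) with h' | h'
      · rw [← Real.cos_neg φ, max_eq_right
          (Real.cos_nonpos_of_pi_div_two_le_of_le (by linarith) (by linarith)), zero_mul]
      have h2 : φ ≤ θ - Real.pi / 2 := by
        by_contra hcon
        exact hm ⟨not_le.mp hcon, h.le⟩
      rw [← Real.cos_neg (φ - θ), max_eq_right (a := Real.cos (-(φ - θ)))
          (Real.cos_nonpos_of_pi_div_two_le_of_le (by linarith) (by linarith)), mul_zero]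
  rw [e, setIntegral_indicator measurableSet_Ioc]
  have hs : Set.Ioo (-Real.pi) Real.pi ∩ Set.Ioc (θ - Real.pi / 2) (Real.pi / 2)
      = Set.Ioc (θ - Real.pi / 2) (Real.pi / 2) := by
    apply Set.inter_eq_right.mpr
    rintro x ⟨hx1, hx2⟩
    exact ⟨by linarith, by linarith⟩
  rw [hs, ← intervalIntegral.integral_of_le (by linarith)]
  have hd : ∀ x ∈ Set.uIcc (θ - Real.pi / 2) (Real.pi / 2),
      HasDerivAt (fun x => (x * Real.cos θ + Real.sin (2 * x - θ) / 2) / 2)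
        (Real.cos x * Real.cos (x - θ)) x := by
    intro x _
    have h2 : HasDerivAt (fun x : ℝ => 2 * x - θ) 2 x := by
      simpa using ((hasDerivAt_id x).const_mul 2).sub_const θ
    have h3 := ((((hasDerivAt_id x).mul_const (Real.cos θ)).add
      ((h2.sin).div_const 2)).div_const 2)
    refine h3.congr_deriv ?_
    have e1 : Real.cos (2 * x - θ) = Real.cos x * Real.cos (x - θ) - Real.sin x * Real.sin (x - θ) := by
      rw [← Real.cos_add]; congr 1; ring
    have e2 : Real.cos θ = Real.cos x * Real.cos (x - θ) + Real.sin x * Real.sin (x - θ) := by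
      rw [← Real.cos_sub]; congr 1; ring
    rw [e1, e2]; ring
  rw [intervalIntegral.integral_eq_sub_of_hasDerivAt hd
    ((by fun_prop : Continuous fun x => Real.cos x * Real.cos (x - θ)).intervalIntegrable _ _)]
  have e1 : Real.sin (2 * (Real.pi / 2) - θ) = Real.sin θ := by
    rw [← Real.sin_pi_sub]; congr 1; ring
  have e2 : Real.sin (2 * (θ - Real.pi / 2) - θ) = - Real.sin θ := by
    rw [← Real.sin_sub_pi]; congr 1; ring
  rw [e1, e2]; ring

lemma radial : ∫ r in Set.Ioi (0 : ℝ), r ^ 3 * Real.exp (-r ^ 2 / 2) = 2 := by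
  have h := integral_rpow_mul_exp_neg_mul_rpow (p := 2) (q := 3) (b := 1 / 2) (by norm_num)
    (by norm_num) (by norm_num)
  have e : ((3 : ℝ) + 1) / 2 = 1 + 1 := by norm_num
  have e' : (-((3 : ℝ) + 1)) / 2 = ((-2 : ℤ) : ℝ) := by norm_num
  rw [e, Real.Gamma_add_one one_ne_zero, Real.Gamma_one, e', Real.rpow_intCast] at h
  norm_num at h
  refine Eq.trans (setIntegral_congr_fun measurableSet_Ioi fun r _ => ?_) h
  congr 2
  ring

lemma gauss2 (θ : ℝ) (h0 : 0 ≤ θ) (h1 : θ ≤ Real.pi) :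
    ∫ p : ℝ × ℝ, max p.1 0 * max (Real.cos θ * p.1 + Real.sin θ * p.2) 0
      ∂((gaussianReal 0 1).prod (gaussianReal 0 1))
    = (1 / (2 * Real.pi)) * ((Real.pi - θ) * Real.cos θ + Real.sin θ) := by
  have hpi := Real.pi_pos
  rw [gaussianReal_of_var_ne_zero _ one_ne_zero,
    prod_withDensity (measurable_gaussianPDF _ _) (measurable_gaussianPDF _ _),
    integral_withDensity_eq_integral_toReal_smul
      (by have := measurable_gaussianPDF 0 1; fun_prop)
      (ae_of_all _ fun p => ENNReal.mul_lt_top gaussianPDF_lt_top gaussianPDF_lt_top),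
    ← Measure.volume_eq_prod, ← integral_comp_polarCoord_symm, polarCoord_target]
  have e : ∀ p ∈ Set.Ioi (0 : ℝ) ×ˢ Set.Ioo (-Real.pi) Real.pi,
      p.1 • ((gaussianPDF 0 1 (polarCoord.symm p).1 * gaussianPDF 0 1 (polarCoord.symm p).2).toReal
        • (max (polarCoord.symm p).1 0 *
          max (Real.cos θ * (polarCoord.symm p).1 + Real.sin θ * (polarCoord.symm p).2) 0))
      = (1 / (2 * Real.pi) * (p.1 ^ 3 * Real.exp (-p.1 ^ 2 / 2))) *
        (max (Real.cos p.2) 0 * max (Real.cos (p.2 - θ)) 0) := by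
    rintro ⟨r, φ⟩ ⟨hr, -⟩
    simp only [Set.mem_Ioi] at hr
    simp only [polarCoord_symm_apply, smul_eq_mul, ENNReal.toReal_mul, toReal_gaussianPDF]
    have a1 : max (r * Real.cos φ) 0 = r * max (Real.cos φ) 0 := by
      rw [mul_max_of_nonneg _ _ hr.le, mul_zero]
    have a2 : max (Real.cos θ * (r * Real.cos φ) + Real.sin θ * (r * Real.sin φ)) 0
        = r * max (Real.cos (φ - θ)) 0 := by
      rw [mul_max_of_nonneg _ _ hr.le, mul_zero, Real.cos_sub]
      congr 1; ring
    have a3 : gaussianPDFReal 0 1 (r * Real.cos φ) * gaussianPDFReal 0 1 (r * Real.sin φ)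
        = 1 / (2 * Real.pi) * Real.exp (-r ^ 2 / 2) := by
      simp only [gaussianPDFReal, NNReal.coe_one, mul_one, sub_zero]
      rw [mul_mul_mul_comm, ← Real.exp_add, ← mul_inv, Real.mul_self_sqrt (by positivity), one_div]
      congr 2
      linear_combination (-r ^ 2 / 2) * Real.sin_sq_add_cos_sq φ
    rw [a1, a2, a3]
    ring
  rw [setIntegral_congr_fun (measurableSet_Ioi.prod measurableSet_Ioo) e, Measure.volume_eq_prod,
    setIntegral_prod_mul (fun r => 1 / (2 * Real.pi) * (r ^ 3 * Real.exp (-r ^ 2 / 2)))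
      (fun φ => max (Real.cos φ) 0 * max (Real.cos (φ - θ)) 0),
    angular θ h0 h1, integral_const_mul, radial]
  ring

lemma slope_lim (σ : ℝ → ℝ) (h0 : σ 0 = 0)
    (hneg : Tendsto (fun s => σ s / s) atBot (nhds 0))
    (hpos : Tendsto (fun s => σ s / s) atTop (nhds (Real.sqrt 2))) (x : ℝ) :
    Tendsto (fun ε : ℝ => σ (ε * x) / ε) atTop (nhds (Real.sqrt 2 * max x 0)) := by
  rcases lt_trichotomy x 0 with hx | hx | hx
  · have h := (hneg.comp (tendsto_id.atTop_mul_const_of_neg hx)).mul_const x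
    rw [max_eq_right hx.le, mul_zero]
    rw [zero_mul] at h
    refine h.congr' ?_
    filter_upwards [eventually_gt_atTop 0] with ε hε
    have := hx.ne
    simp only [Function.comp, id]
    field_simp
  · subst hx
    simp [h0]
  · have h := (hpos.comp (tendsto_id.atTop_mul_const hx)).mul_const x
    rw [max_eq_left hx.le]
    refine h.congr' ?_
    filter_upwards [eventually_gt_atTop 0] with ε hε
    have := hx.ne'
    simp only [Function.comp, id]
    field_simp

lemma memLp_lin {d : ℕ} (z : Fin d → ℝ) :
    MemLp (fun w : Fin d → ℝ => ∑ k, w k * z k) 2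
      (Measure.pi fun _ : Fin d => gaussianReal 0 1) := by
  refine memLp_finsetSum _ fun k _ => ?_
  have h := (memLp_id_gaussianReal (μ := 0) (v := 1) 2).comp_measurePreserving
    (measurePreserving_eval (fun _ : Fin d => gaussianReal 0 1) k)
  exact h.mul_const (z k)


/-- With asymptotic slopes `α = 0`, `β = √2`, the limiting kernel
`G_∞(z_i, z_j) = lim_{ε→∞} E_{w ~ N(0, I_d)}[σ(ε w·z_i) σ(ε w·z_j)/ε²]` on unit vectors
equals the ReLU arc-cosine kernel
`(1/π)(⟨z_i, z_j⟩(π − arccos⟨z_i, z_j⟩) + √(1 − ⟨z_i, z_j⟩²))`. -/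
theorem limiting_kernel_arccos {d : ℕ} (σ : ℝ → ℝ) (C : NNReal)
    (h0 : σ 0 = 0) (hlip : LipschitzWith C σ)
    (hneg : Tendsto (fun s => σ s / s) atBot (nhds 0))
    (hpos : Tendsto (fun s => σ s / s) atTop (nhds (Real.sqrt 2)))
    (zi zj : Fin d → ℝ) (hzi : ∑ k, zi k ^ 2 = 1) (hzj : ∑ k, zj k ^ 2 = 1) :
    Tendsto (fun ε : ℝ =>
        ∫ w, σ (ε * ∑ k, w k * zi k) * σ (ε * ∑ k, w k * zj k) / ε ^ 2
          ∂(Measure.pi fun _ : Fin d => gaussianReal 0 1)) atTop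
      (nhds ((1 / Real.pi) * ((∑ k, zi k * zj k) *
          (Real.pi - Real.arccos (∑ k, zi k * zj k))
        + Real.sqrt (1 - (∑ k, zi k * zj k) ^ 2)))) := by
  set c := ∑ k, zi k * zj k with hc
  have hc2 : c ^ 2 ≤ 1 := by
    have := Finset.sum_mul_sq_le_sq_mul_sq Finset.univ zi zj
    rwa [hzi, hzj, mul_one] at this
  have hc1 : -1 ≤ c ∧ c ≤ 1 := abs_le.mp (by rwa [← sq_le_one_iff_abs_le_one])
  have hcos : Real.cos (Real.arccos c) = c := Real.cos_arccos hc1.1 hc1.2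
  have hsin : Real.sin (Real.arccos c) = Real.sqrt (1 - c ^ 2) := Real.sin_arccos c
  have hlaw := law_eq zi zj hzi hzj c (Real.sin (Real.arccos c))
    (by nlinarith [Real.sin_sq_add_cos_sq (Real.arccos c)]) hc.symm
  have key : ∫ w, (Real.sqrt 2 * max (∑ k, w k * zi k) 0) * (Real.sqrt 2 * max (∑ k, w k * zj k) 0)
      ∂(Measure.pi fun _ : Fin d => gaussianReal 0 1)
      = (1 / Real.pi) * (c * (Real.pi - Real.arccos c) + Real.sqrt (1 - c ^ 2)) := by
    have g := gauss2 (Real.arccos c) (Real.arccos_nonneg c) (Real.arccos_le_pi c)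
    have i1 := integral_map (μ := Measure.pi fun _ : Fin d => gaussianReal 0 1)
      (φ := fun w => ((∑ k, w k * zi k, ∑ k, w k * zj k) : ℝ × ℝ))
      (f := fun p : ℝ × ℝ => max p.1 0 * max p.2 0) (by fun_prop)
      (by apply Continuous.aestronglyMeasurable; fun_prop)
    have i2 := integral_map (μ := (gaussianReal 0 1).prod (gaussianReal 0 1))
      (φ := fun p : ℝ × ℝ => ((p.1, c * p.1 + Real.sin (Real.arccos c) * p.2) : ℝ × ℝ))
      (f := fun p : ℝ × ℝ => max p.1 0 * max p.2 0) (by fun_prop)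
      (by apply Continuous.aestronglyMeasurable; fun_prop)
    rw [hlaw, i2] at i1
    rw [hcos] at g
    simp only at i1
    rw [g, hsin] at i1
    have e : ∀ w : Fin d → ℝ,
        (Real.sqrt 2 * max (∑ k, w k * zi k) 0) * (Real.sqrt 2 * max (∑ k, w k * zj k) 0)
        = 2 * (max (∑ k, w k * zi k) 0 * max (∑ k, w k * zj k) 0) := by
      intro w
      rw [mul_mul_mul_comm, Real.mul_self_sqrt (by norm_num)]
    simp only [e]
    rw [integral_const_mul, ← i1]
    field_simp
  rw [← key]
  have hσ : ∀ ε : ℝ, 0 < ε → ∀ x, |σ (ε * x) / ε| ≤ C * |x| := by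
    intro ε hε x
    have h := hlip.dist_le_mul (ε * x) 0
    rw [h0, Real.dist_eq, Real.dist_eq, sub_zero, sub_zero, abs_mul, abs_of_pos hε] at h
    rw [abs_div, abs_of_pos hε, div_le_iff₀ hε]
    linarith
  have hcont := hlip.continuous
  refine tendsto_integral_filter_of_dominated_convergence
    (fun w => (C : ℝ) ^ 2 * ‖(∑ k, w k * zi k) * (∑ k, w k * zj k)‖) ?_ ?_ ?_ ?_
  · refine Eventually.of_forall fun ε => ?_
    apply Continuous.aestronglyMeasurable
    fun_prop
  · filter_upwards [eventually_gt_atTop 0] with ε hε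
    refine ae_of_all _ fun w => ?_
    have e : σ (ε * ∑ k, w k * zi k) * σ (ε * ∑ k, w k * zj k) / ε ^ 2
      = (σ (ε * ∑ k, w k * zi k) / ε) * (σ (ε * ∑ k, w k * zj k) / ε) := by
      field_simp
    rw [e, Real.norm_eq_abs, Real.norm_eq_abs, abs_mul, abs_mul]
    calc _ ≤ (C * |∑ k, w k * zi k|) * (C * |∑ k, w k * zj k|) :=
          mul_le_mul (hσ ε hε _) (hσ ε hε _) (abs_nonneg _) (by positivity)
      _ = _ := by ring
  · exact (((memLp_lin zi).integrable_mul (memLp_lin zj)).norm).const_mul _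
  · refine ae_of_all _ fun w => ?_
    refine ((slope_lim σ h0 hneg hpos (∑ k, w k * zi k)).mul
      (slope_lim σ h0 hneg hpos (∑ k, w k * zj k))).congr fun ε => ?_
    rw [div_mul_div_comm, sq]
end
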